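/- Any two projection games G and H satisfy ‖G ⊗ H‖ ≤ val₊(G) · ‖H‖, where ‖·‖ denotes the collision value. -/

import Mathlib

open Finset

/-- A projection game: finite nonempty question sets `Q1` (Alice) and `Q2` (Bob),
a finite nonempty alphabet `A`, and a probability mass function `μ` on triples
`(u, v, π)` where `π : A → Option A` encodes a projection constraint
(the answer pair `(α, β)` satisfies `π` iff `π β = some α`). -/
structure ProjGame where
  Q1 : Type
  Q2 : Type
  A : Type
  [fQ1 : Fintype Q1]
  [fQ2 : Fintype Q2]
  [fA : Fintype A]
  [neQ1 : Nonempty Q1]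
  [neQ2 : Nonempty Q2]
  [neA : Nonempty A]
  [dQ1 : DecidableEq Q1]
  [dQ2 : DecidableEq Q2]
  [dA : DecidableEq A]
  μ : Q1 × Q2 × (A → Option A) → ℝ
  μ_nonneg : ∀ x, 0 ≤ μ x
  μ_sum : ∑ x, μ x = 1

attribute [instance] ProjGame.fQ1 ProjGame.fQ2 ProjGame.fA
  ProjGame.neQ1 ProjGame.neQ2 ProjGame.neA ProjGame.dQ1 ProjGame.dQ2 ProjGame.dA

namespace ProjGame

variable (G : ProjGame)

/-- The `U`-marginal (Alice-side marginal) of `μ`. -/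
noncomputable def wU (u : G.Q1) : ℝ := ∑ v, ∑ π, G.μ (u, v, π)

/-- The `V`-marginal (Bob-side marginal) of `μ`. -/
noncomputable def wV (v : G.Q2) : ℝ := ∑ u, ∑ π, G.μ (u, v, π)

/-- The game operator: `(Gf)(u,α) = E_{(v,π)|u} [∑_{β : π β = some α} f (v,β)]`. -/
noncomputable def op (f : G.Q2 × G.A → ℝ) : G.Q1 × G.A → ℝ :=
  fun p =>
    (∑ v, ∑ π, G.μ (p.1, v, π) * ∑ β, if π β = some p.2 then f (v, β) else 0) / G.wU p.1

/-- Squared norm on functions on `U × Σ`: `‖g‖² = E_u [∑_α g(u,α)²]`. -/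
noncomputable def normUsq (g : G.Q1 × G.A → ℝ) : ℝ := ∑ u, G.wU u * ∑ α, (g (u, α)) ^ 2

/-- Squared norm on functions on `V × Σ`: `‖f‖² = E_v [∑_β f(v,β)²]`. -/
noncomputable def normVsq (f : G.Q2 × G.A → ℝ) : ℝ := ∑ v, G.wV v * ∑ β, (f (v, β)) ^ 2

/-- Inner product `⟨g, g'⟩ = E_u [∑_α g(u,α) g'(u,α)]`. -/
noncomputable def inn (g g' : G.Q1 × G.A → ℝ) : ℝ :=
  ∑ u, G.wU u * ∑ α, g (u, α) * g' (u, α)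

/-- An assignment for Bob. -/
def IsBob (f : G.Q2 × G.A → ℝ) : Prop := (∀ p, 0 ≤ f p) ∧ ∀ v, ∑ β, f (v, β) = 1

/-- An assignment for Alice. -/
def IsAlice (g : G.Q1 × G.A → ℝ) : Prop := (∀ p, 0 ≤ g p) ∧ ∀ u, ∑ α, g (u, α) = 1

/-- The value of the game: `val(G) = max ⟨g, Gf⟩` over assignments. -/
noncomputable def val : ℝ :=
  sSup { x | ∃ f g, G.IsBob f ∧ G.IsAlice g ∧ x = G.inn g (G.op f) }

/-- The collision value `‖G‖ = max_f ‖Gf‖` over assignments `f` for Bob. -/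
noncomputable def collVal : ℝ :=
  sSup { x | ∃ f, G.IsBob f ∧ x = Real.sqrt (G.normUsq (G.op f)) }

/-- Product of projection constraints. -/
def tensorC {A A' : Type} (π : A → Option A) (π' : A' → Option A') :
    A × A' → Option (A × A') :=
  fun b => (π b.1).bind fun a => (π' b.2).map fun a' => (a, a')

/-- The product (parallel repetition) of two projection games. -/
noncomputable def tensor (G H : ProjGame) : ProjGame where
  Q1 := G.Q1 × H.Q1
  Q2 := G.Q2 × H.Q2
  A := G.A × H.A
  μ := fun x =>
    ∑ y : (G.Q1 × G.Q2 × (G.A → Option G.A)) × (H.Q1 × H.Q2 × (H.A → Option H.A)),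
      if ((y.1.1, y.2.1), (y.1.2.1, y.2.2.1), tensorC y.1.2.2 y.2.2.2) = x
      then G.μ y.1 * H.μ y.2 else 0
  μ_nonneg := by
    intro x
    refine Finset.sum_nonneg fun y _ => ?_
    split
    · exact mul_nonneg (G.μ_nonneg _) (H.μ_nonneg _)
    · exact le_refl 0
  μ_sum := by
    rw [Finset.sum_comm]
    simp only [Finset.sum_ite_eq, Finset.mem_univ, if_true]
    rw [Fintype.sum_prod_type]
    calc (∑ y1, ∑ y2, G.μ y1 * H.μ y2)
        = (∑ y1, G.μ y1) * (∑ y2, H.μ y2) := by rw [Finset.sum_mul_sum]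
      _ = 1 := by rw [G.μ_sum, H.μ_sum, mul_one]

/-- `G.iterTensor k` is the `(k+1)`-fold parallel repetition `G^{⊗(k+1)}`. -/
noncomputable def iterTensor (G : ProjGame) : ℕ → ProjGame
  | 0 => G
  | n + 1 => G.tensor (G.iterTensor n)

/-- `val₊(G)`: supremum of values of vector assignments. -/
noncomputable def valPlus (G : ProjGame) : ℝ :=
  sSup { x | ∃ n : ℕ, 0 < n ∧ ∃ f : G.Q2 × G.A → Fin n → ℝ,
    (∀ p i, 0 ≤ f p i) ∧
    (∀ v, Real.sqrt (∑ i, (∑ β, f (v, β) i) ^ 2) ≤ 1) ∧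
    x = Real.sqrt (∑ u, G.wU u * ∑ α, ∑ i, (G.op (fun q => f q i) (u, α)) ^ 2) }

/-- `‖Th‖² = E_v [(∑_β h(v,β))²]`. -/
noncomputable def Tnormsq (G : ProjGame) (h : G.Q2 × G.A → ℝ) : ℝ :=
  ∑ v, G.wV v * (∑ β, h (v, β)) ^ 2

/-- `λ₊(G)`: supremum of `‖Gh‖/‖Th‖` over nonnegative `h` with `‖Th‖ > 0`. -/
noncomputable def lambdaPlus (G : ProjGame) : ℝ :=
  sSup { x | ∃ h : G.Q2 × G.A → ℝ, (∀ p, 0 ≤ h p) ∧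
    0 < Real.sqrt (G.Tnormsq h) ∧
    x = Real.sqrt (G.normUsq (G.op h)) / Real.sqrt (G.Tnormsq h) }

/-- The symmetrized distribution on `V × V` (with the constraints marginalized out). -/
noncomputable def msym (G : ProjGame) (v v' : G.Q2) : ℝ :=
  ∑ u, ((∑ π, G.μ (u, v, π)) * (∑ π', G.μ (u, v', π'))) / G.wU u

/-- `G` is `γ`-expanding: the Markov operator of the symmetrized constraint graph has
spectral gap at least `γ`, i.e. `|⟨x, Ax⟩| ≤ (1-γ) E_v[x(v)²]` for mean-zero `x`. -/
def IsExpanding (G : ProjGame) (γ : ℝ) : Prop :=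
  ∀ x : G.Q2 → ℝ, (∑ v, G.wV v * x v) = 0 →
    |∑ v, ∑ v', G.msym v v' * x v * x v'| ≤ (1 - γ) * ∑ v, G.wV v * (x v) ^ 2

/-- The symmetrized distribution on `(v, v', π, π')`. -/
noncomputable def msymFull (G : ProjGame) (v v' : G.Q2) (π π' : G.A → Option G.A) : ℝ :=
  ∑ u, (G.μ (u, v, π) * G.μ (u, v', π')) / G.wU u

/-- The value of the assignment `x` in the symmetrized game `G_sym`. -/
noncomputable def symValAssign (G : ProjGame) (x : G.Q2 → G.A) : ℝ :=
  ∑ v, ∑ v', ∑ π, ∑ π', G.msymFull v v' π π' *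
    (if ∃ α, π (x v) = some α ∧ π' (x v') = some α then 1 else 0)

/-- The value of the symmetrized game `G_sym`. -/
noncomputable def symVal (G : ProjGame) : ℝ :=
  sSup { r | ∃ x : G.Q2 → G.A, r = G.symValAssign x }

end ProjGame

/-!
On `Q1 × A` and `Q2 × A` the game operator is a nonnegative matrix, and the matrix of `G ⊗ H` is
the Kronecker product of the matrices of `G` and `H`; hence `G ⊗ H` may be applied as `I ⊗ H`
followed by `G ⊗ I`. Given an assignment `f` for Bob in `G ⊗ H`, read `(I ⊗ H) f` as a family of
functions on `Q2 × A` indexed by the pairs `(u', α')` of `H`, with the weight of `u'`. Summing it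
over the answers to a fixed question `v` of `G` gives `H` applied to an assignment for Bob in `H`,
so the vector obtained has length at most `‖H‖`: the family is a vector assignment for `G` scaled
by `‖H‖`, and its value is `‖(G ⊗ H) f‖`.

Both suprema are finite because `‖Gf‖ ≤ ‖Tf‖` for nonnegative `f`, by the Cauchy–Schwarz inequality.
-/

namespace ProjGame

open scoped Matrix

section Operator

variable (G : ProjGame)

/-- The joint marginal of `μ` on pairs of questions. -/
noncomputable def wUV (u : G.Q1) (v : G.Q2) : ℝ := ∑ π, G.μ (u, v, π)

/-- The matrix of the game operator: the entry at `(u, α)`, `(v, β)` is the probability, given `u`,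
that Bob's question is `v` and the constraint maps `β` to `α`. The row of a question `u` of
probability zero vanishes, since division by zero gives zero. -/
noncomputable def opMatrix : Matrix (G.Q1 × G.A) (G.Q2 × G.A) ℝ :=
  Matrix.of fun p q => (∑ π, G.μ (p.1, q.1, π) * if π q.2 = some p.2 then 1 else 0) / G.wU p.1

lemma wUV_nonneg (u : G.Q1) (v : G.Q2) : 0 ≤ G.wUV u v :=
  sum_nonneg fun _ _ => G.μ_nonneg _

lemma wU_nonneg (u : G.Q1) : 0 ≤ G.wU u :=
  sum_nonneg fun v _ => G.wUV_nonneg u v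

lemma wV_nonneg (v : G.Q2) : 0 ≤ G.wV v :=
  sum_nonneg fun u _ => G.wUV_nonneg u v

lemma sum_wV : ∑ v, G.wV v = 1 := by
  rw [← G.μ_sum]
  simp only [wV, Fintype.sum_prod_type]
  exact sum_comm

lemma op_eq_mulVec (f : G.Q2 × G.A → ℝ) : G.op f = G.opMatrix *ᵥ f := by
  ext p
  simp only [op, Matrix.mulVec, dotProduct, opMatrix, Matrix.of_apply, Fintype.sum_prod_type,
    div_mul_eq_mul_div, ← sum_div, sum_mul, mul_sum, mul_assoc, ite_mul, one_mul, zero_mul]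
  congr 1
  exact sum_congr rfl fun v _ => sum_comm

lemma op_smul (c : ℝ) (f : G.Q2 × G.A → ℝ) : G.op (c • f) = c • G.op f := by
  simp only [op_eq_mulVec, Matrix.mulVec_smul]

lemma op_sum {ι : Type*} (s : Finset ι) (f : ι → G.Q2 × G.A → ℝ) :
    G.op (∑ i ∈ s, f i) = ∑ i ∈ s, G.op (f i) := by
  simp only [op_eq_mulVec, ← Matrix.mulVecLin_apply, map_sum]

lemma opMatrix_nonneg (p : G.Q1 × G.A) (q : G.Q2 × G.A) : 0 ≤ G.opMatrix p q :=
  div_nonneg (sum_nonneg fun _ _ => mul_nonneg (G.μ_nonneg _) (by split_ifs <;> simp))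
    (G.wU_nonneg _)

lemma sum_opMatrix_le (u : G.Q1) (q : G.Q2 × G.A) :
    ∑ α, G.opMatrix (u, α) q ≤ G.wUV u q.1 / G.wU u := by
  have at_most_one (π : G.A → Option G.A) : ∑ α, (if π q.2 = some α then (1 : ℝ) else 0) ≤ 1 := by
    cases π q.2 <;> simp
  simp only [opMatrix, Matrix.of_apply, ← sum_div]
  rw [sum_comm]
  simp only [← mul_sum]
  exact div_le_div_of_nonneg_right
    (sum_le_sum fun π _ => mul_le_of_le_one_right (G.μ_nonneg _) (at_most_one π)) (G.wU_nonneg u)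

lemma normUsq_eq_sum_prod (g : G.Q1 × G.A → ℝ) :
    G.normUsq g = ∑ p : G.Q1 × G.A, G.wU p.1 * g p ^ 2 := by
  simp only [normUsq, Fintype.sum_prod_type, mul_sum]

lemma normUsq_smul (c : ℝ) (g : G.Q1 × G.A → ℝ) : G.normUsq (c • g) = c ^ 2 * G.normUsq g := by
  simp only [normUsq, Pi.smul_apply, smul_eq_mul, mul_pow, ← mul_sum, mul_left_comm _ (c ^ 2)]

variable {G}

lemma op_nonneg {f : G.Q2 × G.A → ℝ} (hf : 0 ≤ f) : 0 ≤ G.op f := by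
  rw [op_eq_mulVec]
  exact fun p => sum_nonneg fun q _ => mul_nonneg (G.opMatrix_nonneg p q) (hf q)

lemma sum_op_le {f : G.Q2 × G.A → ℝ} (hf : 0 ≤ f) (u : G.Q1) :
    ∑ α, G.op f (u, α) ≤ (∑ v, G.wUV u v * ∑ β, f (v, β)) / G.wU u :=
  calc ∑ α, G.op f (u, α) = ∑ q, (∑ α, G.opMatrix (u, α) q) * f q := by
        simp only [op_eq_mulVec, Matrix.mulVec, dotProduct, sum_mul]
        exact sum_comm
    _ ≤ ∑ q, G.wUV u q.1 / G.wU u * f q :=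
        sum_le_sum fun q _ => mul_le_mul_of_nonneg_right (G.sum_opMatrix_le u q) (hf q)
    _ = (∑ v, G.wUV u v * ∑ β, f (v, β)) / G.wU u := by
        simp only [Fintype.sum_prod_type, sum_div, mul_sum, div_mul_eq_mul_div]

lemma wU_mul_sum_op_sq_le {f : G.Q2 × G.A → ℝ} (hf : 0 ≤ f) (u : G.Q1) :
    G.wU u * ∑ α, G.op f (u, α) ^ 2 ≤ ∑ v, G.wUV u v * (∑ β, f (v, β)) ^ 2 := by
  have cauchy_schwarz : (∑ v, G.wUV u v * ∑ β, f (v, β)) ^ 2 ≤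
      G.wU u * ∑ v, G.wUV u v * (∑ β, f (v, β)) ^ 2 :=
    sum_sq_le_sum_mul_sum_of_sq_le_mul _ (f := G.wUV u) (fun v _ => G.wUV_nonneg u v)
      (fun v _ => mul_nonneg (G.wUV_nonneg u v) (sq_nonneg _))
      (fun v _ => by rw [mul_pow, sq (G.wUV u v), mul_assoc])
  have sum_sq_le : ∑ α, G.op f (u, α) ^ 2 ≤
      ((∑ v, G.wUV u v * ∑ β, f (v, β)) / G.wU u) ^ 2 :=
    (sum_sq_le_sq_sum_of_nonneg fun α _ => op_nonneg hf (u, α)).trans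
      (pow_le_pow_left₀ (sum_nonneg fun α _ => op_nonneg hf (u, α)) (sum_op_le hf u) 2)
  rcases (G.wU_nonneg u).eq_or_lt with hu | hu
  · rw [← hu, zero_mul]
    exact sum_nonneg fun v _ => mul_nonneg (G.wUV_nonneg u v) (sq_nonneg _)
  · calc G.wU u * ∑ α, G.op f (u, α) ^ 2
        ≤ G.wU u * ((∑ v, G.wUV u v * ∑ β, f (v, β)) / G.wU u) ^ 2 := by gcongr
      _ = (∑ v, G.wUV u v * ∑ β, f (v, β)) ^ 2 / G.wU u := by field_simp
      _ ≤ ∑ v, G.wUV u v * (∑ β, f (v, β)) ^ 2 := (div_le_iff₀' hu).mpr cauchy_schwarz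

lemma normUsq_op_le_Tnormsq {f : G.Q2 × G.A → ℝ} (hf : 0 ≤ f) :
    G.normUsq (G.op f) ≤ G.Tnormsq f :=
  calc G.normUsq (G.op f) ≤ ∑ u, ∑ v, G.wUV u v * (∑ β, f (v, β)) ^ 2 :=
        sum_le_sum fun u _ => wU_mul_sum_op_sq_le hf u
    _ = G.Tnormsq f := by
        rw [sum_comm]
        simp only [Tnormsq, wV, wUV, sum_mul]

end Operator

section CollisionValue

variable {G : ProjGame}

lemma collVal_nonneg (G : ProjGame) : 0 ≤ G.collVal :=
  Real.sSup_nonneg (by rintro _ ⟨f, -, rfl⟩; exact Real.sqrt_nonneg _)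

lemma IsBob.Tnormsq_eq_one {f : G.Q2 × G.A → ℝ} (hf : G.IsBob f) : G.Tnormsq f = 1 := by
  simp only [Tnormsq, hf.2, one_pow, mul_one, sum_wV]

lemma IsBob.normUsq_op_le_collVal_sq {f : G.Q2 × G.A → ℝ} (hf : G.IsBob f) :
    G.normUsq (G.op f) ≤ G.collVal ^ 2 := by
  refine (Real.sqrt_le_left G.collVal_nonneg).mp (le_csSup ⟨1, ?_⟩ ⟨f, hf, rfl⟩)
  rintro _ ⟨g, hg, rfl⟩
  exact Real.sqrt_le_one.mpr ((normUsq_op_le_Tnormsq hg.1).trans_eq hg.Tnormsq_eq_one)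

end CollisionValue

section VectorValue

variable {G : ProjGame} {ι : Type*} [Fintype ι] {f : ι → G.Q2 × G.A → ℝ} {c : ℝ}

lemma valPlus_nonneg (G : ProjGame) : 0 ≤ G.valPlus :=
  Real.sSup_nonneg (by rintro _ ⟨n, -, f, -, -, rfl⟩; exact Real.sqrt_nonneg _)

lemma sum_normUsq (g : ι → G.Q1 × G.A → ℝ) :
    ∑ i, G.normUsq (g i) = ∑ u, G.wU u * ∑ α, ∑ i, g i (u, α) ^ 2 := by
  simp only [normUsq]
  rw [sum_comm]
  refine sum_congr rfl fun u _ => ?_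
  rw [← mul_sum, sum_comm]

lemma sum_normUsq_op_le (hf : ∀ i, 0 ≤ f i) (hc : ∀ v, ∑ i, (∑ β, f i (v, β)) ^ 2 ≤ c) :
    ∑ i, G.normUsq (G.op (f i)) ≤ c :=
  calc ∑ i, G.normUsq (G.op (f i)) ≤ ∑ i, G.Tnormsq (f i) :=
        sum_le_sum fun i _ => normUsq_op_le_Tnormsq (hf i)
    _ = ∑ v, G.wV v * ∑ i, (∑ β, f i (v, β)) ^ 2 := by
        simp only [Tnormsq, mul_sum]
        exact sum_comm
    _ ≤ ∑ v, G.wV v * c :=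
        sum_le_sum fun v _ => mul_le_mul_of_nonneg_left (hc v) (G.wV_nonneg v)
    _ = c := by rw [← sum_mul, sum_wV, one_mul]

lemma sum_normUsq_op_le_valPlus_sq (hf : ∀ i, 0 ≤ f i)
    (hunit : ∀ v, ∑ i, (∑ β, f i (v, β)) ^ 2 ≤ 1) :
    ∑ i, G.normUsq (G.op (f i)) ≤ G.valPlus ^ 2 := by
  rcases isEmpty_or_nonempty ι with _ | _
  · simpa only [univ_eq_empty, sum_empty] using sq_nonneg G.valPlus
  let e := (Fintype.equivFin ι).symm
  rw [← e.sum_comp, sum_normUsq]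
  refine (Real.sqrt_le_left G.valPlus_nonneg).mp <| le_csSup ⟨1, ?_⟩
    ⟨Fintype.card ι, Fintype.card_pos, fun q j => f (e j) q, fun q j => hf (e j) q,
      fun v => ?_, rfl⟩
  · rintro _ ⟨n, -, g, hg, hgunit, rfl⟩
    rw [Real.sqrt_le_one, ← sum_normUsq]
    exact sum_normUsq_op_le (fun j q => hg q j) fun v => Real.sqrt_le_one.mp (hgunit v)
  · rw [Real.sqrt_le_one, e.sum_comp fun i => (∑ β, f i (v, β)) ^ 2]
    exact hunit v

lemma sum_normUsq_op_le_valPlus_sq_mul (hf : ∀ i, 0 ≤ f i)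
    (hc : ∀ v, ∑ i, (∑ β, f i (v, β)) ^ 2 ≤ c) :
    ∑ i, G.normUsq (G.op (f i)) ≤ G.valPlus ^ 2 * c := by
  have c_nonneg : 0 ≤ c :=
    (sum_nonneg fun _ _ => sq_nonneg _).trans (hc (Classical.arbitrary G.Q2))
  rcases c_nonneg.eq_or_lt with rfl | c_pos
  · simpa only [mul_zero] using sum_normUsq_op_le hf hc
  have normalized : ∑ i, G.normUsq (G.op ((√c)⁻¹ • f i)) ≤ G.valPlus ^ 2 := by
    refine sum_normUsq_op_le_valPlus_sq
      (fun i => smul_nonneg (inv_nonneg.mpr (Real.sqrt_nonneg c)) (hf i)) fun v => ?_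
    simp only [Pi.smul_apply, smul_eq_mul, ← mul_sum, mul_pow, inv_pow, Real.sq_sqrt c_nonneg]
    exact inv_mul_le_one_of_le₀ (hc v) c_nonneg
  simp only [op_smul, normUsq_smul, ← mul_sum, inv_pow, Real.sq_sqrt c_nonneg] at normalized
  rwa [inv_mul_le_iff₀ c_pos, mul_comm] at normalized

lemma sum_mul_normUsq_op_le_valPlus_sq_mul {w : ι → ℝ} (hw : 0 ≤ w) (hf : ∀ i, 0 ≤ f i)
    (hc : ∀ v, ∑ i, w i * (∑ β, f i (v, β)) ^ 2 ≤ c) :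
    ∑ i, w i * G.normUsq (G.op (f i)) ≤ G.valPlus ^ 2 * c := by
  have scaled := sum_normUsq_op_le_valPlus_sq_mul (f := fun i => √(w i) • f i)
    (fun i => smul_nonneg (Real.sqrt_nonneg _) (hf i)) fun v => by
      simpa only [Pi.smul_apply, smul_eq_mul, ← mul_sum, mul_pow, Real.sq_sqrt (hw _)] using hc v
  simpa only [op_smul, normUsq_smul, Real.sq_sqrt (hw _)] using scaled

end VectorValue

section Tensor

variable {G H : ProjGame}

lemma tensorC_eq_some_iff {A A' : Type} (π : A → Option A) (π' : A' → Option A')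
    (b a : A × A') : tensorC π π' b = some a ↔ π b.1 = some a.1 ∧ π' b.2 = some a.2 := by
  cases h : π b.1 <;> cases h' : π' b.2 <;> simp [tensorC, h, h', Prod.ext_iff]

lemma tensor_μ_apply (u : G.Q1) (u' : H.Q1) (v : G.Q2) (v' : H.Q2)
    (ρ : G.A × H.A → Option (G.A × H.A)) :
    (G.tensor H).μ ((u, u'), (v, v'), ρ) =
      ∑ π, ∑ π', if tensorC π π' = ρ then G.μ (u, v, π) * H.μ (u', v', π') else 0 := by
  simp only [tensor, Fintype.sum_prod_type, Prod.mk.injEq, and_assoc, ite_and, sum_ite_irrel,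
    sum_const_zero, sum_ite_eq', mem_univ, if_true]

lemma sum_tensor_μ_mul (u : G.Q1) (u' : H.Q1) (v : G.Q2) (v' : H.Q2)
    (F : (G.A × H.A → Option (G.A × H.A)) → ℝ) :
    ∑ ρ, (G.tensor H).μ ((u, u'), (v, v'), ρ) * F ρ =
      ∑ π, ∑ π', G.μ (u, v, π) * H.μ (u', v', π') * F (tensorC π π') := by
  calc ∑ ρ, (G.tensor H).μ ((u, u'), (v, v'), ρ) * F ρ
      = ∑ ρ, (∑ π, ∑ π', if tensorC π π' = ρ then G.μ (u, v, π) * H.μ (u', v', π') else 0) *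
          F ρ :=
        -- `simp` cannot rewrite here: the questions of `G.tensor H` are pairs only up to unfolding.
        sum_congr rfl fun ρ _ => congrArg (· * F ρ) (tensor_μ_apply u u' v v' ρ)
    _ = ∑ π, ∑ π', ∑ ρ,
          if tensorC π π' = ρ then G.μ (u, v, π) * H.μ (u', v', π') * F ρ else 0 := by
        simp only [sum_mul, ite_mul, zero_mul]
        rw [sum_comm]
        exact sum_congr rfl fun π _ => sum_comm
    _ = ∑ π, ∑ π', G.μ (u, v, π) * H.μ (u', v', π') * F (tensorC π π') := by
        simp only [sum_ite_eq, mem_univ, if_true]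

lemma wU_tensor (u : G.Q1) (u' : H.Q1) : (G.tensor H).wU (u, u') = G.wU u * H.wU u' := by
  have wUV_tensor (v : G.Q2) (v' : H.Q2) :
      (G.tensor H).wUV (u, u') (v, v') = G.wUV u v * H.wUV u' v' := by
    have total_mass := sum_tensor_μ_mul u u' v v' fun _ => 1
    simp only [mul_one, ← sum_mul_sum] at total_mass
    exact total_mass
  calc (G.tensor H).wU (u, u') = ∑ v, ∑ v', (G.tensor H).wUV (u, u') (v, v') :=
        Fintype.sum_prod_type _
    _ = G.wU u * H.wU u' := by
        simp only [wUV_tensor, ← sum_mul_sum]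
        rfl

lemma opMatrix_tensor (p : G.Q1 × G.A) (p' : H.Q1 × H.A) (q : G.Q2 × G.A) (q' : H.Q2 × H.A) :
    (G.tensor H).opMatrix ((p.1, p'.1), (p.2, p'.2)) ((q.1, q'.1), (q.2, q'.2)) =
      G.opMatrix p q * H.opMatrix p' q' := by
  have indicator (π : G.A → Option G.A) (π' : H.A → Option H.A) :
      (if tensorC π π' (q.2, q'.2) = some (p.2, p'.2) then (1 : ℝ) else 0) =
        (if π q.2 = some p.2 then 1 else 0) * if π' q'.2 = some p'.2 then 1 else 0 := by
    simp only [tensorC_eq_some_iff, ite_and, ite_mul, one_mul, zero_mul]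
  have numerator := sum_tensor_μ_mul p.1 p'.1 q.1 q'.1
    fun ρ => if ρ (q.2, q'.2) = some (p.2, p'.2) then 1 else 0
  simp only [indicator, mul_mul_mul_comm, ← sum_mul_sum] at numerator
  simp only [opMatrix, Matrix.of_apply, div_mul_div_comm]
  exact congrArg₂ (· / ·) numerator (wU_tensor p.1 p'.1)

/-- The operator `I ⊗ H`, applied to a function on Bob's questions and answers in `G ⊗ H`. The
result is encoded as a family of functions on `G.Q2 × G.A` indexed by `H.Q1 × H.A`. -/
noncomputable def opRight (f : (G.Q2 × H.Q2) × (G.A × H.A) → ℝ) (p : H.Q1 × H.A) :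
    G.Q2 × G.A → ℝ :=
  fun q => H.op (fun q' => f ((q.1, q'.1), (q.2, q'.2))) p

lemma opRight_nonneg {f : (G.Q2 × H.Q2) × (G.A × H.A) → ℝ} (hf : 0 ≤ f) (p : H.Q1 × H.A) :
    0 ≤ opRight f p :=
  fun q => op_nonneg (fun q' => hf ((q.1, q'.1), (q.2, q'.2))) p

lemma op_tensor_apply (f : (G.Q2 × H.Q2) × (G.A × H.A) → ℝ) (p : G.Q1 × G.A) (p' : H.Q1 × H.A) :
    (G.tensor H).op f ((p.1, p'.1), (p.2, p'.2)) = G.op (opRight f p') p := by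
  calc (G.tensor H).op f ((p.1, p'.1), (p.2, p'.2))
      = ∑ r : (G.Q2 × H.Q2) × (G.A × H.A),
          (G.tensor H).opMatrix ((p.1, p'.1), (p.2, p'.2)) r * f r :=
        congrFun ((G.tensor H).op_eq_mulVec f) _
    _ = ∑ q, ∑ q', G.opMatrix p q * H.opMatrix p' q' * f ((q.1, q'.1), (q.2, q'.2)) := by
        rw [← (Equiv.prodProdProdComm _ _ _ _).sum_comp, Fintype.sum_prod_type]
        exact sum_congr rfl fun q _ => sum_congr rfl fun q' _ =>
          congrArg (· * f ((q.1, q'.1), (q.2, q'.2))) (opMatrix_tensor p p' q q')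
    _ = G.op (opRight f p') p := by
        simp only [opRight, op_eq_mulVec, Matrix.mulVec, dotProduct, mul_sum, mul_assoc]

lemma normUsq_op_tensor (f : (G.Q2 × H.Q2) × (G.A × H.A) → ℝ) :
    (G.tensor H).normUsq ((G.tensor H).op f) =
      ∑ p : H.Q1 × H.A, H.wU p.1 * G.normUsq (G.op (opRight f p)) := by
  have weighted_apply (r : (G.Q1 × H.Q1) × (G.A × H.A)) :
      (G.tensor H).wU r.1 * (G.tensor H).op f r ^ 2 =
        G.wU r.1.1 * H.wU r.1.2 * G.op (opRight f (r.1.2, r.2.2)) (r.1.1, r.2.1) ^ 2 :=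
    congrArg₂ (fun w x => w * x ^ 2) (wU_tensor r.1.1 r.1.2)
      (op_tensor_apply f (r.1.1, r.2.1) (r.1.2, r.2.2))
  calc (G.tensor H).normUsq ((G.tensor H).op f)
      = ∑ r : (G.Q1 × H.Q1) × (G.A × H.A), (G.tensor H).wU r.1 * (G.tensor H).op f r ^ 2 :=
        (G.tensor H).normUsq_eq_sum_prod _
    _ = ∑ p' : H.Q1 × H.A, ∑ p : G.Q1 × G.A,
          G.wU p.1 * H.wU p'.1 * G.op (opRight f p') p ^ 2 := by
        simp only [weighted_apply]
        rw [← (Equiv.prodProdProdComm _ _ _ _).sum_comp, Fintype.sum_prod_type, sum_comm]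
        rfl
    _ = ∑ p' : H.Q1 × H.A, H.wU p'.1 * G.normUsq (G.op (opRight f p')) := by
        simp only [normUsq_eq_sum_prod, mul_sum, mul_assoc, mul_left_comm (H.wU _)]

lemma IsBob.sum_fst {f : (G.Q2 × H.Q2) × (G.A × H.A) → ℝ} (hf : (G.tensor H).IsBob f)
    (v : G.Q2) : H.IsBob (∑ β, fun q' => f ((v, q'.1), (β, q'.2))) := by
  have slice_nonneg (β : G.A) : 0 ≤ fun q' : H.Q2 × H.A => f ((v, q'.1), (β, q'.2)) :=
    fun _ => hf.1 _
  refine ⟨sum_nonneg fun β _ => slice_nonneg β, fun v' => ?_⟩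
  simp only [Finset.sum_apply]
  rw [sum_comm, ← hf.2 (v, v')]
  exact (Fintype.sum_prod_type fun b : G.A × H.A => f ((v, v'), b)).symm

lemma IsBob.sum_wU_mul_sum_opRight_sq_le {f : (G.Q2 × H.Q2) × (G.A × H.A) → ℝ}
    (hf : (G.tensor H).IsBob f) (v : G.Q2) :
    ∑ p : H.Q1 × H.A, H.wU p.1 * (∑ β, opRight f p (v, β)) ^ 2 ≤ H.collVal ^ 2 := by
  calc ∑ p : H.Q1 × H.A, H.wU p.1 * (∑ β, opRight f p (v, β)) ^ 2
      = H.normUsq (H.op (∑ β, fun q' => f ((v, q'.1), (β, q'.2)))) := by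
        simp only [normUsq_eq_sum_prod, op_sum, Finset.sum_apply, opRight]
    _ ≤ H.collVal ^ 2 := (hf.sum_fst v).normUsq_op_le_collVal_sq

end Tensor

end ProjGame

/-- Any two projection games satisfy `‖G ⊗ H‖ ≤ val₊(G) · ‖H‖`. -/
theorem collVal_tensor_le_valPlus (G H : ProjGame) :
    (G.tensor H).collVal ≤ G.valPlus * H.collVal := by
  have bound_nonneg : 0 ≤ G.valPlus * H.collVal := mul_nonneg G.valPlus_nonneg H.collVal_nonneg
  refine Real.sSup_le ?_ bound_nonneg
  rintro _ ⟨f, hf, rfl⟩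
  rw [Real.sqrt_le_left bound_nonneg, mul_pow]
  exact (ProjGame.normUsq_op_tensor f).trans_le <|
    ProjGame.sum_mul_normUsq_op_le_valPlus_sq_mul (fun p => H.wU_nonneg p.1)
      (ProjGame.opRight_nonneg hf.1) hf.sum_wU_mul_sum_opRight_sq_le
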